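/- Let ψ : Ω × □^n → ℝ be an admissible function for which there exists a positive function α ∈ L^1(Ω) with |ψ(x,y)| ≤ α(x) for all (x,y) ∈ Ω × □^n. Then ∫_Ω ψ(x, v_h(x)) dx → ∫_{Ω×□^n} ψ(x, y) dx dy as h → ∞. -/

import Mathlib

open MeasureTheory Filter Topology

/-- The unit cell `□ = [0,1)^d` in `ℝ^d`. -/
def unitCell (d : ℕ) : Set (Fin d → ℝ) := Set.univ.pi fun _ => Set.Ico (0 : ℝ) 1

/-- The `n`-fold product `□^n` of unit cells. -/
def unitCellPow (d n : ℕ) : Set (Fin n → Fin d → ℝ) := Set.univ.pi fun _ => unitCell d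

/-- The oscillating sequence `v_h(x) = (⟨x/ρ_1(ε_h)⟩, …, ⟨x/ρ_n(ε_h)⟩)`. -/
noncomputable def vFn {d n : ℕ} (ρ : Fin n → ℝ → ℝ) (ε : ℕ → ℝ) (h : ℕ)
    (x : Fin d → ℝ) : Fin n → Fin d → ℝ :=
  fun k i => Int.fract (x i / ρ k (ε h))

/-- A function `ψ : Ω × □^n → ℝ` is *admissible* if for every `δ > 0` there are
compact sets `X ⊆ Ω` and `Y ⊆ □` whose complements have measure at most `δ`
such that the restriction of `ψ` to `X × Y^n` is continuous. -/
def AdmissibleFun {d n : ℕ} (Ω : Set (Fin d → ℝ))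
    (ψ : (Fin d → ℝ) → (Fin n → Fin d → ℝ) → ℝ) : Prop :=
  ∀ δ > (0 : ℝ), ∃ X : Set (Fin d → ℝ),
    IsCompact X ∧ X ⊆ Ω ∧ volume (Ω \ X) ≤ ENNReal.ofReal δ ∧
    ∃ Y : Set (Fin d → ℝ),
      IsCompact Y ∧ Y ⊆ unitCell d ∧ volume (unitCell d \ Y) ≤ ENNReal.ofReal δ ∧
      ContinuousOn (fun p : (Fin d → ℝ) × (Fin n → Fin d → ℝ) => ψ p.1 p.2)
        (X ×ˢ Set.univ.pi fun _ => Y)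

/-!
After projecting `□^n` to the torus `(ℝ/ℤ)^(nd)` the oscillating points `(x/ρ_1, …, x/ρ_n)` depend
continuously on `x`. For a nonzero integer frequency, separation of scales makes the finest scale
present in it dominate, so the resulting frequency in `x` tends to infinity and the
Riemann–Lebesgue lemma yields the limit for characters. Density then gives it for every integrable
map from `ℝ^d` to the continuous functions on the torus.

For admissible `ψ` one truncates `ψ`, restricts it to compact sets `X` and `Y^n` on which it is
continuous, and extends it to the torus by Tietze's theorem. The error is controlled by the measure
of the points outside `X × Y^n`, simultaneously for `dx dy` and for the measures carried by the
graphs of the `v_h`: once `ρ_k ≤ 1`, the cells of side `ρ_k` that meet a bounded set `B` lie in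
the unit neighbourhood of `B`, and in each of them `⟨x/ρ_k⟩` is uniformly distributed.
-/

open scoped Asymptotics FourierTransform

/-- Strictly positive scales `r 0 ≫ r 1 ≫ ⋯`, all tending to zero along `l`, each negligible
against every earlier one. -/
structure SeparatedScales {ι : Type*} {n : ℕ} (l : Filter ι) (r : Fin n → ι → ℝ) : Prop where
  pos : ∀ k h, 0 < r k h
  tendsto_zero : ∀ k, Tendsto (r k) l (𝓝 0)
  isLittleO : ∀ ⦃j k⦄, j < k → r k =o[l] r j

namespace SeparatedScales

variable {ι : Type*} {n : ℕ} {l : Filter ι} {r : Fin n → ι → ℝ}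

theorem of_tendsto_div_succ (pos : ∀ k h, 0 < r k h) (tendsto_zero : ∀ k, Tendsto (r k) l (𝓝 0))
    (tendsto_div : ∀ (k : ℕ) (hk : k + 1 < n),
      Tendsto (fun h => r ⟨k + 1, hk⟩ h / r ⟨k, Nat.lt_of_succ_lt hk⟩ h) l (𝓝 0)) :
    SeparatedScales l r := by
  have step (k : ℕ) (hk : k + 1 < n) : r ⟨k + 1, hk⟩ =o[l] r ⟨k, Nat.lt_of_succ_lt hk⟩ :=
    (Asymptotics.isLittleO_iff_tendsto fun h h0 => ((pos _ h).ne' h0).elim).2 (tendsto_div k hk)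
  refine ⟨pos, tendsto_zero, fun ⟨j, hj⟩ ⟨k, hk⟩ hjk => ?_⟩
  induction k, Fin.mk_lt_mk.1 hjk using Nat.le_induction with
  | base => exact step j hk
  | succ k hjk ih => exact (step k hk).trans (ih (by lia) (Fin.mk_lt_mk.2 (by lia)))

theorem tendsto_sum_inv_smul_cobounded {E : Type*} [NormedAddCommGroup E] [NormedSpace ℝ E]
    (hr : SeparatedScales l r) {c : Fin n → E} (hc : c ≠ 0) :
    Tendsto (fun h => ∑ k, (r k h)⁻¹ • c k) l (Bornology.cobounded E) := by
  obtain ⟨k₀, hk₀⟩ := Function.ne_iff.1 hc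
  obtain ⟨J, hJ, hmax⟩ := (Set.toFinite {k | c k ≠ 0}).exists_maximal ⟨k₀, hk₀⟩
  -- The finest scale with a nonzero coefficient dominates the sum.
  have hterm (k : Fin n) :
      Tendsto (fun h => (r J h / r k h) • c k) l (𝓝 (if k = J then c J else 0)) := by
    rcases lt_trichotomy k J with hk | rfl | hk
    · simpa [hk.ne] using (hr.isLittleO hk).tendsto_div_nhds_zero.smul_const (c k)
    · simp [(hr.pos k _).ne', tendsto_const_nhds]
    · have hck : c k = 0 := not_not.1 fun hck => hk.not_ge (hmax hck hk.le)
      simp [hck, hk.ne', tendsto_const_nhds]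
  have hscaled : Tendsto (fun h => ‖∑ k, (r J h / r k h) • c k‖) l (𝓝 ‖c J‖) := by
    simpa using (tendsto_finsetSum Finset.univ fun k _ => hterm k).norm
  have hinv : Tendsto (fun h => (r J h)⁻¹) l atTop :=
    tendsto_inv_nhdsGT_zero.comp <|
      tendsto_nhdsWithin_iff.2 ⟨hr.tendsto_zero J, .of_forall (hr.pos J)⟩
  rw [← tendsto_norm_atTop_iff_cobounded]
  refine (hinv.atTop_mul_pos (norm_pos_iff.2 hJ) hscaled).congr fun h => ?_
  rw [← abs_of_pos (inv_pos.2 (hr.pos J h)), ← Real.norm_eq_abs, ← norm_smul, Finset.smul_sum]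
  simp only [smul_smul, div_eq_mul_inv, inv_mul_cancel_left₀ (hr.pos J h).ne']

end SeparatedScales

section Torus

variable {ι κ : Type*}

/-- The projection of a family of points of `ℝ^κ` to the torus `(ℝ/ℤ)^(ι × κ)`. It identifies
`□^n` with a torus, on which the oscillating sequences become continuous. -/
def toTorus (y : ι → κ → ℝ) : UnitAddTorus (ι × κ) := fun p => (y p.1 p.2 : UnitAddCircle)

theorem continuous_toTorus : Continuous (toTorus : (ι → κ → ℝ) → UnitAddTorus (ι × κ)) := by
  unfold toTorus
  fun_prop

theorem toTorus_fract (y : ι → κ → ℝ) : toTorus (fun k i => Int.fract (y k i)) = toTorus y :=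
  funext fun _ => AddCircle.coe_fract _

theorem continuous_toTorus_div (r : ι → ℝ) :
    Continuous fun x : κ → ℝ => toTorus fun k i => x i / r k :=
  continuous_toTorus.comp (by fun_prop)

variable [Fintype ι] [Fintype κ]

theorem mFourier_toTorus (q : ι × κ → ℤ) (y : ι → κ → ℝ) :
    UnitAddTorus.mFourier q (toTorus y) = 𝐞 (∑ p, q p * y p.1 p.2) := by
  simp only [UnitAddTorus.mFourier, toTorus, ContinuousMap.coe_mk, fourier_coe_apply,
    Real.fourierChar_apply, ← Complex.exp_sum]
  congr 1
  push_cast [Finset.mul_sum, Finset.sum_mul]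
  exact Finset.sum_congr rfl fun p _ => by ring

end Torus

theorem integral_mFourier_eq_zero {κ : Type*} [Fintype κ] {q : κ → ℤ} (hq : q ≠ 0) :
    ∫ t, UnitAddTorus.mFourier q t = 0 := by
  obtain ⟨i, hi⟩ := Function.ne_iff.1 hq
  calc ∫ t, UnitAddTorus.mFourier q t = ∏ j, ∫ t, fourier (q j) t :=
        integral_fintype_prod_volume_eq_prod fun j => ⇑(fourier (T := 1) (q j))
    _ = 0 := Finset.prod_eq_zero (Finset.mem_univ i) <|
        integral_eq_zero_of_add_right_eq_neg (fourier_add_half_inv_index hi one_pos)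

theorem tendsto_integral_mul_mFourier_toTorus {ι κ : Type*} [Fintype κ] {n : ℕ} {l : Filter ι}
    {r : Fin n → ι → ℝ} (hr : SeparatedScales l r) (f : (κ → ℝ) → ℂ)
    {q : Fin n × κ → ℤ} (hq : q ≠ 0) :
    Tendsto (fun h => ∫ x, f x * UnitAddTorus.mFourier q (toTorus fun k i => x i / r k h)) l
      (𝓝 0) := by
  let φ (k : Fin n) : StrongDual ℝ (κ → ℝ) :=
    -∑ i, (q (k, i) : ℝ) • ContinuousLinearMap.proj i
  have hφ : φ ≠ 0 := by
    classical
    obtain ⟨⟨k, i⟩, hki⟩ := Function.ne_iff.1 hq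
    refine fun h => hki ?_
    simpa [φ, Pi.single_apply] using DFunLike.congr_fun (congrFun h k) (Pi.single i 1)
  have hfreq := hr.tendsto_sum_inv_smul_cobounded hφ
  rw [Metric.cobounded_eq_cocompact] at hfreq
  refine ((tendsto_integral_exp_smul_cocompact f volume).comp hfreq).congr fun h => ?_
  refine integral_congr_ae (.of_forall fun x => ?_)
  simp only [Circle.smul_def, smul_eq_mul, mFourier_toTorus, mul_comm (f x)]
  congr 3
  simp [φ, Fintype.sum_prod_type, Finset.mul_sum, div_eq_inv_mul, mul_left_comm]

section TestFunctions

variable {T : Type*} [TopologicalSpace T] [CompactSpace T]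

/-- Integration against a finite measure, as a continuous functional on the continuous functions on
a compact space. -/
noncomputable def integralFunctional (𝕜 : Type*) [RCLike 𝕜] [MeasurableSpace T] [BorelSpace T]
    (ν : Measure T) [IsFiniteMeasure ν] : StrongDual 𝕜 C(T, 𝕜) :=
  L1.integralCLM' 𝕜 ∘L ContinuousMap.toLp 1 ν 𝕜

theorem integralFunctional_apply {𝕜 : Type*} [RCLike 𝕜] [MeasurableSpace T] [BorelSpace T]
    (ν : Measure T) [IsFiniteMeasure ν] (c : C(T, 𝕜)) :
    integralFunctional 𝕜 ν c = ∫ t, c t ∂ν :=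
  (L1.integral_eq' 𝕜 _).symm.trans <|
    (L1.integral_eq_integral _).trans (integral_congr_ae (ContinuousMap.coeFn_toLp ν c))

variable {ι X 𝕜 : Type*} [RCLike 𝕜] [MeasurableSpace X] {μ : Measure X} {l : Filter ι}

theorem integrable_apply_comp {τ : X → T} (hτ : AEStronglyMeasurable τ μ) {F : X → C(T, 𝕜)}
    (hF : Integrable F μ) : Integrable (fun x => F x (τ x)) μ :=
  hF.mono (continuous_eval.comp_aestronglyMeasurable (hF.1.prodMk hτ))
    (.of_forall fun x => (F x).norm_coe_le_norm (τ x))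

theorem dist_integral_apply_comp_le {τ : X → T} (hτ : AEStronglyMeasurable τ μ)
    {F G : X → C(T, 𝕜)} (hF : Integrable F μ) (hG : Integrable G μ) :
    dist (∫ x, F x (τ x) ∂μ) (∫ x, G x (τ x) ∂μ) ≤ ∫ x, dist (F x) (G x) ∂μ := by
  rw [dist_eq_norm, ← integral_sub (integrable_apply_comp hτ hF) (integrable_apply_comp hτ hG)]
  simp only [dist_eq_norm]
  exact norm_integral_le_of_norm_le (hF.sub hG).norm
    (.of_forall fun x => (F x - G x).norm_coe_le_norm (τ x))

theorem tendsto_setIntegral_comp_of_dense_span {τ : ι → X → T}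
    (hτ : ∀ h, AEStronglyMeasurable (τ h) μ) {s : Set X} (hs : μ s < ⊤)
    {Λ : StrongDual 𝕜 C(T, 𝕜)} {S : Set C(T, 𝕜)}
    (hS : (Submodule.span 𝕜 S).topologicalClosure = ⊤)
    (hconv : ∀ c ∈ S, Tendsto (fun h => ∫ x in s, c (τ h x) ∂μ) l (𝓝 (μ.real s * Λ c)))
    (c : C(T, 𝕜)) : Tendsto (fun h => ∫ x in s, c (τ h x) ∂μ) l (𝓝 (μ.real s * Λ c)) := by
  have : IsFiniteMeasure (μ.restrict s) := ⟨by simpa using hs⟩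
  have hint (h : ι) (c : C(T, 𝕜)) : Integrable (fun x => c (τ h x)) (μ.restrict s) :=
    integrable_apply_comp (hτ h).restrict (integrable_const c)
  have hequi : Equicontinuous fun h (c : C(T, 𝕜)) => ∫ x in s, c (τ h x) ∂μ :=
    (LipschitzWith.uniformEquicontinuous _ (μ.real s).toNNReal fun h =>
      LipschitzWith.of_dist_le_mul fun c c' => by
        simpa using! dist_integral_apply_comp_le (hτ h).restrict (integrable_const c)
          (integrable_const c')).equicontinuous
  have hclosed := hequi.isClosed_setOfPred_tendsto (l := l) ((μ.real s : 𝕜) • Λ).continuous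
  refine closure_minimal (fun c hc => ?_) hclosed (hS.ge (Submodule.mem_top (x := c)))
  induction hc using Submodule.span_induction with
  | mem c hc => exact hconv c hc
  | zero => simp [tendsto_const_nhds]
  | add c c' _ _ hc hc' =>
    simpa [integral_add (hint _ c) (hint _ c'), mul_add] using! hc.add hc'
  | smul a c _ hc => simpa [integral_const_mul, mul_left_comm] using! hc.const_mul a

theorem tendsto_integral_apply_comp_of_setIntegral {τ : ι → X → T}
    (hτ : ∀ h, AEStronglyMeasurable (τ h) μ) {Λ : StrongDual 𝕜 C(T, 𝕜)}
    (hconv : ∀ s, MeasurableSet s → μ s < ⊤ → ∀ c,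
      Tendsto (fun h => ∫ x in s, c (τ h x) ∂μ) l (𝓝 (μ.real s * Λ c)))
    {F : X → C(T, 𝕜)} (hF : Integrable F μ) :
    Tendsto (fun h => ∫ x, F x (τ h x) ∂μ) l (𝓝 (∫ x, Λ (F x) ∂μ)) := by
  suffices h : Tendsto (fun h => ∫ x, F x (τ h x) ∂μ) l (𝓝 (Λ (∫ x, F x ∂μ))) by
    rwa [Λ.integral_comp_comm hF]
  refine Integrable.induction (fun F : X → C(T, 𝕜) =>
    Tendsto (fun h => ∫ x, F x (τ h x) ∂μ) l (𝓝 (Λ (∫ x, F x ∂μ)))) ?_ ?_ ?_ ?_ hF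
  · intro c s hs hμs
    have happly (h : ι) : (fun x => s.indicator (fun _ => c) x (τ h x)) =
        s.indicator fun x => c (τ h x) := by
      ext x
      by_cases hx : x ∈ s <;> simp [hx]
    simpa [happly, integral_indicator hs, RCLike.real_smul_eq_coe_mul] using hconv s hs hμs c
  · intro F G _ hF hG hF' hG'
    simpa [integral_add hF hG, integral_add (integrable_apply_comp (hτ _) hF)
      (integrable_apply_comp (hτ _) hG)] using hF'.add hG'
  · have hequi : Equicontinuous fun h (F : X →₁[μ] C(T, 𝕜)) => ∫ x, F x (τ h x) ∂μ :=
      (LipschitzWith.uniformEquicontinuous _ 1 fun h => LipschitzWith.of_dist_le_mul fun F G => by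
        simpa [L1.dist_eq_integral_dist] using dist_integral_apply_comp_le (hτ h)
          (L1.integrable_coeFn F) (L1.integrable_coeFn G)).equicontinuous
    exact hequi.isClosed_setOfPred_tendsto (Λ.continuous.comp continuous_integral)
  · intro F G hFG _ hF
    rw [← integral_congr_ae hFG]
    refine hF.congr fun h => integral_congr_ae ?_
    filter_upwards [hFG] with x hx using by rw [hx]

end TestFunctions

section Equidistribution

variable {ι κ : Type*} [Fintype κ] {n : ℕ} {l : Filter ι} {r : Fin n → ι → ℝ}

theorem tendsto_setIntegral_mFourier_toTorus (hr : SeparatedScales l r) {s : Set (κ → ℝ)}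
    (hs : MeasurableSet s) (q : Fin n × κ → ℤ) :
    Tendsto (fun h => ∫ x in s, UnitAddTorus.mFourier q (toTorus fun k i => x i / r k h)) l
      (𝓝 (volume.real s * ∫ t, UnitAddTorus.mFourier q t)) := by
  rcases eq_or_ne q 0 with rfl | hq
  · have : IsProbabilityMeasure (volume : Measure UnitAddCircle) := ⟨UnitAddCircle.measure_univ⟩
    simp [UnitAddTorus.mFourier_zero, tendsto_const_nhds]
  · rw [integral_mFourier_eq_zero hq, mul_zero]
    refine (tendsto_integral_mul_mFourier_toTorus hr (s.indicator 1) hq).congr fun h => ?_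
    rw [← integral_indicator hs]
    congr with x
    by_cases hx : x ∈ s <;> simp [hx]

theorem tendsto_setIntegral_toTorus (hr : SeparatedScales l r) {s : Set (κ → ℝ)}
    (hs : MeasurableSet s) (hs' : volume s < ⊤) (c : C(UnitAddTorus (Fin n × κ), ℝ)) :
    Tendsto (fun h => ∫ x in s, c (toTorus fun k i => x i / r k h)) l
      (𝓝 (volume.real s * ∫ t, c t)) := by
  have hℂ := tendsto_setIntegral_comp_of_dense_span (l := l) (μ := volume)
    (fun h => (continuous_toTorus_div fun k => r k h).aestronglyMeasurable) hs'
    (Λ := integralFunctional ℂ volume) UnitAddTorus.span_mFourier_closure_eq_top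
    (by simpa only [Set.forall_mem_range, integralFunctional_apply] using!
      tendsto_setIntegral_mFourier_toTorus hr hs)
    ((ContinuousMap.mk _ Complex.continuous_ofReal).comp c)
  simpa [integralFunctional_apply, integral_complex_ofReal, tendsto_ofReal_iff,
    ← Complex.ofReal_mul] using! hℂ

theorem tendsto_integral_apply_toTorus (hr : SeparatedScales l r)
    {F : (κ → ℝ) → C(UnitAddTorus (Fin n × κ), ℝ)} (hF : Integrable F) :
    Tendsto (fun h => ∫ x, F x (toTorus fun k i => x i / r k h)) l (𝓝 (∫ x, ∫ t, F x t)) := by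
  simpa only [integralFunctional_apply] using tendsto_integral_apply_comp_of_setIntegral
    (fun h => (continuous_toTorus_div fun k => r k h).aestronglyMeasurable)
    (Λ := integralFunctional ℝ volume)
    (by simpa only [integralFunctional_apply] using! fun _ => tendsto_setIntegral_toTorus hr) hF

end Equidistribution

section UnitCell

variable {d n : ℕ}

theorem volume_unitCell : volume (unitCell d) = 1 := by
  simp [unitCell, volume_pi_pi]

theorem measurableSet_unitCell : MeasurableSet (unitCell d) :=
  .univ_pi fun _ => measurableSet_Ico

theorem volume_restrict_unitCellPow :
    (volume.restrict (unitCellPow d n)) = Measure.pi fun _ => volume.restrict (unitCell d) :=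
  Measure.restrict_pi_pi _ _

theorem volume_restrict_unitCell :
    volume.restrict (unitCell d) = Measure.pi fun _ => volume.restrict (Set.Ico (0 : ℝ) 1) :=
  Measure.restrict_pi_pi _ _

theorem fract_mem_unitCell (x : Fin d → ℝ) : (fun i => Int.fract (x i)) ∈ unitCell d :=
  fun i _ => ⟨Int.fract_nonneg (x i), Int.fract_lt_one (x i)⟩

theorem injOn_toTorus_unitCellPow : Set.InjOn toTorus (unitCellPow d n) := by
  intro y hy z hz h
  ext k i
  exact (AddCircle.coe_eq_coe_iff_of_mem_Ico (a := (0 : ℝ)) (by simpa using hy k trivial i trivial)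
    (by simpa using hz k trivial i trivial)).1 (congrFun h (k, i))

theorem measurePreserving_toTorus :
    MeasurePreserving toTorus (volume.restrict (unitCellPow d n))
      (volume : Measure (UnitAddTorus (Fin n × Fin d))) := by
  have hmk : MeasurePreserving ((↑) : ℝ → UnitAddCircle) (volume.restrict (Set.Ico 0 1)) := by
    simpa [restrict_Ico_eq_restrict_Ioc] using UnitAddCircle.measurePreserving_mk 0
  refine ⟨continuous_toTorus.measurable, (Measure.pi_eq fun s hs => ?_).symm⟩
  have hpre : toTorus ⁻¹' Set.univ.pi s =
      Set.univ.pi fun k => Set.univ.pi fun i => ((↑) : ℝ → UnitAddCircle) ⁻¹' s (k, i) := by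
    ext y
    simp [toTorus]
  rw [Measure.map_apply continuous_toTorus.measurable (.univ_pi hs), hpre,
    volume_restrict_unitCellPow, Measure.pi_pi, Fintype.prod_prod_type]
  refine Finset.prod_congr rfl fun k _ => ?_
  rw [volume_restrict_unitCell, Measure.pi_pi]
  exact Finset.prod_congr rfl fun i _ => hmk.measure_preimage (hs (k, i)).nullMeasurableSet

end UnitCell

section Cells

open scoped Pointwise

variable {d : ℕ} {r : ℝ}

theorem mem_smul_vadd_unitCell_iff (hr : 0 < r) {m : Fin d → ℤ} {x : Fin d → ℝ} :
    x ∈ r • ((fun i => (m i : ℝ)) +ᵥ unitCell d) ↔ ∀ i, ⌊x i / r⌋ = m i := by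
  simp [Set.mem_smul_set_iff_inv_smul_mem₀ hr.ne', Set.mem_vadd_set_iff_neg_vadd_mem, unitCell,
    Int.floor_eq_iff, div_eq_inv_mul, add_comm]

theorem mem_smul_vadd_of_fract_mem (hr : 0 < r) {A : Set (Fin d → ℝ)} {x : Fin d → ℝ}
    (hx : (fun i => Int.fract (x i / r)) ∈ A) :
    x ∈ r • ((fun i => (⌊x i / r⌋ : ℝ)) +ᵥ A) := by
  refine Set.mem_smul_set.2 ⟨_, Set.vadd_mem_vadd_set hx, ?_⟩
  ext i
  simp [Int.floor_add_fract, mul_div_cancel₀ _ hr.ne']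

theorem dist_le_of_mem_smul_vadd_unitCell (hr : 0 < r) {m : Fin d → ℤ} {x y : Fin d → ℝ}
    (hx : x ∈ r • ((fun i => (m i : ℝ)) +ᵥ unitCell d))
    (hy : y ∈ r • ((fun i => (m i : ℝ)) +ᵥ unitCell d)) : dist x y ≤ r := by
  rw [mem_smul_vadd_unitCell_iff hr] at hx hy
  refine (dist_pi_le_iff hr.le).2 fun i => ?_
  have h := Int.abs_sub_lt_one_of_floor_eq_floor ((hx i).trans (hy i).symm)
  rw [← sub_div, abs_div, abs_of_pos hr, div_lt_one hr] at h
  exact h.le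

theorem volume_setOf_mem_and_fract_mem_le (hr : 0 < r) (B A : Set (Fin d → ℝ)) :
    volume {x | x ∈ B ∧ (fun i => Int.fract (x i / r)) ∈ A} ≤
      volume (Metric.cthickening r B) * volume A := by
  let cell (A : Set (Fin d → ℝ)) (m : Fin d → ℤ) : Set (Fin d → ℝ) :=
    r • ((fun i => (m i : ℝ)) +ᵥ A)
  let S : Set (Fin d → ℤ) := (fun x i => ⌊x i / r⌋) '' B
  have hvol (A m) : volume (cell A m) = volume (cell (unitCell d) m) * volume A := by
    simp [cell, Measure.addHaar_smul, volume_unitCell]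
  have hdisj : Pairwise (Function.onFun Disjoint fun m : S => cell (unitCell d) m) :=
    fun m m' hne => Set.disjoint_left.2 fun x hx hx' => hne <| Subtype.ext <| funext fun i =>
      ((mem_smul_vadd_unitCell_iff hr).1 hx i).symm.trans ((mem_smul_vadd_unitCell_iff hr).1 hx' i)
  have hmeas (m : S) : MeasurableSet (cell (unitCell d) m) :=
    (measurableSet_unitCell.const_vadd _).const_smul₀ r
  have hsub : ⋃ m : S, cell (unitCell d) m ⊆ Metric.cthickening r B := by
    refine Set.iUnion_subset fun ⟨_, b, hb, rfl⟩ x hx => ?_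
    exact Metric.mem_cthickening_of_dist_le x b r B hb <| dist_le_of_mem_smul_vadd_unitCell hr hx <|
      (mem_smul_vadd_unitCell_iff hr).2 fun _ => rfl
  calc volume {x | x ∈ B ∧ (fun i => Int.fract (x i / r)) ∈ A}
      ≤ volume (⋃ m : S, cell A m) := measure_mono fun x hx =>
        Set.mem_iUnion.2 ⟨⟨_, x, hx.1, rfl⟩, mem_smul_vadd_of_fract_mem hr hx.2⟩
    _ ≤ ∑' m : S, volume (cell A m) := measure_iUnion_le _
    _ = volume (⋃ m : S, cell (unitCell d) m) * volume A := by
        rw [measure_iUnion hdisj hmeas, ← ENNReal.tsum_mul_right]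
        exact tsum_congr fun m => hvol A m
    _ ≤ volume (Metric.cthickening r B) * volume A := by gcongr

end Cells

section UniformlySpread

variable {d n : ℕ} {Ω : Set (Fin d → ℝ)}

/-- A measure on `Ω × □^n` whose first marginal is the volume of `Ω` and whose other marginals have
at most unit density with respect to `□`, uniformly on sets localised in the first variable up to
an error of unit size. Both `dx dy` and the measure carried by the graph of a fast oscillating
sequence have this property, so that a single approximation serves both sides of the limit. -/
structure UniformlySpread (Ω : Set (Fin d → ℝ)) (ν : Measure ((Fin d → ℝ) × (Fin n → Fin d → ℝ))) :
    Prop where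
  measurePreserving_fst : MeasurePreserving Prod.fst ν (volume.restrict Ω)
  measure_le : ∀ (k : Fin n) ⦃B A : Set (Fin d → ℝ)⦄, MeasurableSet B → MeasurableSet A →
    ν {p | p.1 ∈ B ∧ p.2 k ∈ A} ≤
      volume (Metric.cthickening 1 B) * volume.restrict (unitCell d) A

instance : IsProbabilityMeasure (volume.restrict (unitCell d)) :=
  ⟨by simp [volume_unitCell]⟩

instance : IsProbabilityMeasure (volume.restrict (unitCellPow d n)) := by
  rw [volume_restrict_unitCellPow]
  infer_instance

theorem uniformlySpread_prod (Ω : Set (Fin d → ℝ)) :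
    UniformlySpread Ω ((volume.restrict Ω).prod (volume.restrict (unitCellPow d n))) where
  measurePreserving_fst := measurePreserving_fst
  measure_le k B A _ hA := by
    have heval : MeasurePreserving (fun y : Fin n → Fin d → ℝ => y k)
        (volume.restrict (unitCellPow d n)) (volume.restrict (unitCell d)) := by
      rw [volume_restrict_unitCellPow]
      exact measurePreserving_eval _ k
    calc ((volume.restrict Ω).prod (volume.restrict (unitCellPow d n))) {p | p.1 ∈ B ∧ p.2 k ∈ A}
        = volume.restrict Ω B * volume.restrict (unitCell d) A := by
          rw [← heval.measure_preimage hA.nullMeasurableSet, ← Measure.prod_prod]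
          rfl
      _ ≤ volume (Metric.cthickening 1 B) * volume.restrict (unitCell d) A := by
          gcongr
          · exact Measure.restrict_le_self
          · exact Metric.self_subset_cthickening B

theorem measurable_prodMk_vFn (ρ : Fin n → ℝ → ℝ) (ε : ℕ → ℝ) (h : ℕ) :
    Measurable fun x : Fin d → ℝ => (x, vFn ρ ε h x) := by
  unfold vFn
  fun_prop

theorem uniformlySpread_map_vFn (Ω : Set (Fin d → ℝ)) {ρ : Fin n → ℝ → ℝ} {ε : ℕ → ℝ} {h : ℕ}
    (hρ : ∀ k, ρ k (ε h) ∈ Set.Ioc 0 1) :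
    UniformlySpread Ω ((volume.restrict Ω).map fun x => (x, vFn ρ ε h x)) where
  measurePreserving_fst := by
    refine ⟨measurable_fst, ?_⟩
    rw [Measure.map_map measurable_fst (measurable_prodMk_vFn ρ ε h)]
    exact Measure.map_id
  measure_le k B A hB hA := by
    have hBA : MeasurableSet
        {p : (Fin d → ℝ) × (Fin n → Fin d → ℝ) | p.1 ∈ B ∧ p.2 k ∈ A} :=
      (measurable_fst hB).inter ((measurable_pi_apply k).comp measurable_snd hA)
    rw [Measure.map_apply (measurable_prodMk_vFn ρ ε h) hBA, Measure.restrict_apply hA]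
    calc volume.restrict Ω {x | x ∈ B ∧ vFn ρ ε h x k ∈ A}
        ≤ volume {x | x ∈ B ∧ vFn ρ ε h x k ∈ A ∩ unitCell d} :=
          (Measure.restrict_apply_le _ _).trans <| measure_mono fun x hx =>
            ⟨hx.1, hx.2, fract_mem_unitCell _⟩
      _ ≤ volume (Metric.cthickening (ρ k (ε h)) B) * volume (A ∩ unitCell d) :=
          volume_setOf_mem_and_fract_mem_le (hρ k).1 B _
      _ ≤ volume (Metric.cthickening 1 B) * volume (A ∩ unitCell d) := by
          gcongr
          exact Metric.cthickening_mono (hρ k).2 B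

namespace UniformlySpread

variable {ν : Measure ((Fin d → ℝ) × (Fin n → Fin d → ℝ))}

theorem quasiMeasurePreserving_eval (hν : UniformlySpread Ω ν) (k : Fin n) :
    Measure.QuasiMeasurePreserving (fun p : (Fin d → ℝ) × (Fin n → Fin d → ℝ) => p.2 k) ν
      (volume.restrict (unitCell d)) := by
  have hk : Measurable fun p : (Fin d → ℝ) × (Fin n → Fin d → ℝ) => p.2 k := by fun_prop
  refine ⟨hk, .mk fun A hA hA0 => ?_⟩
  rw [Measure.map_apply hk hA]
  simpa [hA0] using! hν.measure_le k .univ hA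

theorem measure_notMem_prod_le (hν : UniformlySpread Ω ν) {B X Y : Set (Fin d → ℝ)}
    (hB : MeasurableSet B) (hX : MeasurableSet X) (hY : MeasurableSet Y) :
    ν {p | p.1 ∈ B ∧ p ∉ X ×ˢ Set.univ.pi fun _ => Y} ≤
      volume (Ω \ X) + n * (volume (Metric.cthickening 1 B) * volume (unitCell d \ Y)) := by
  calc ν {p | p.1 ∈ B ∧ p ∉ X ×ˢ Set.univ.pi fun _ => Y}
      ≤ ν (Prod.fst ⁻¹' Xᶜ ∪ ⋃ k, {p | p.1 ∈ B ∧ p.2 k ∈ Yᶜ}) := measure_mono <| by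
        rintro p ⟨hpB, hp⟩
        simp only [Set.mem_prod, Set.mem_univ_pi, not_and_or, not_forall] at hp
        exact hp.imp id fun ⟨k, hk⟩ => Set.mem_iUnion.2 ⟨k, hpB, hk⟩
    _ ≤ ν (Prod.fst ⁻¹' Xᶜ) + ∑ k, ν {p | p.1 ∈ B ∧ p.2 k ∈ Yᶜ} :=
        (measure_union_le _ _).trans (by gcongr; exact measure_iUnion_fintype_le _ _)
    _ ≤ volume.restrict Ω Xᶜ +
          ∑ _k : Fin n, volume (Metric.cthickening 1 B) * volume.restrict (unitCell d) Yᶜ := by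
        rw [hν.measurePreserving_fst.measure_preimage hX.compl.nullMeasurableSet]
        gcongr with k
        exact hν.measure_le k hB hY.compl
    _ = _ := by
        simp [Measure.restrict_apply, hX.compl, hY.compl, Set.sdiff_eq_compl_inter]

end UniformlySpread

end UniformlySpread

section Admissible

variable {d n : ℕ} {Ω : Set (Fin d → ℝ)} {ψ : (Fin d → ℝ) → (Fin n → Fin d → ℝ) → ℝ}
  {ν : Measure ((Fin d → ℝ) × (Fin n → Fin d → ℝ))}

theorem ae_eventually_mem_of_measure_sdiff_le {E : Type*} [MeasurableSpace E] {μ : Measure E}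
    {s : Set E} {X : ℕ → Set E} (hX : ∀ j, MeasurableSet (X j)) {δ : ℕ → ℝ}
    (hδ : Summable δ) (hsX : ∀ j, μ (s \ X j) ≤ ENNReal.ofReal (δ j)) :
    ∀ᵐ x ∂μ.restrict s, ∀ᶠ j in atTop, x ∈ X j := by
  have hsum : ∑' j, μ.restrict s (X j)ᶜ ≠ ⊤ := by
    refine ne_top_of_le_ne_top hδ.tsum_ofReal_ne_top (ENNReal.tsum_le_tsum fun j => ?_)
    rw [Measure.restrict_apply (hX j).compl, Set.inter_comm, ← Set.sdiff_eq]
    exact hsX j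
  simpa using ae_eventually_notMem hsum

theorem AdmissibleFun.exists_exhaustion (hψ : AdmissibleFun Ω ψ) :
    ∃ S : ℕ → Set ((Fin d → ℝ) × (Fin n → Fin d → ℝ)),
      (∀ j, IsCompact (S j) ∧ S j ⊆ Ω ×ˢ unitCellPow d n ∧
        ContinuousOn (fun p => ψ p.1 p.2) (S j)) ∧
      ∀ ν, UniformlySpread Ω ν → ∀ᵐ p ∂ν, p ∈ ⋃ j, S j := by
  choose X hXc hXΩ hX Y hYc hYu hY hcont using fun j : ℕ => hψ ((1 / 2) ^ j) (by positivity)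
  refine ⟨fun j => X j ×ˢ Set.univ.pi fun _ => Y j, fun j => ⟨(hXc j).prod
    (isCompact_univ_pi fun _ => hYc j), Set.prod_mono (hXΩ j) (Set.pi_mono fun _ _ => hYu j),
    hcont j⟩, fun ν hν => ?_⟩
  have hXev := hν.measurePreserving_fst.quasiMeasurePreserving.ae <|
    ae_eventually_mem_of_measure_sdiff_le (fun j => (hXc j).measurableSet)
      summable_geometric_two hX
  have hYev := ae_all_iff.2 fun k => (hν.quasiMeasurePreserving_eval k).ae <|
    ae_eventually_mem_of_measure_sdiff_le (fun j => (hYc j).measurableSet)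
      summable_geometric_two hY
  filter_upwards [hXev, hYev] with p hp hp'
  obtain ⟨j, hj, hj'⟩ := (hp.and (eventually_all.2 hp')).exists
  exact Set.mem_iUnion.2 ⟨j, hj, fun k _ => hj' k⟩

theorem AdmissibleFun.ae_mem (hψ : AdmissibleFun Ω ψ) (hν : UniformlySpread Ω ν) :
    ∀ᵐ p ∂ν, p ∈ Ω ×ˢ unitCellPow d n := by
  obtain ⟨S, hS, hae⟩ := hψ.exists_exhaustion
  exact (hae ν hν).mono fun p hp => Set.iUnion_subset (fun j => (hS j).2.1) hp

theorem AdmissibleFun.aestronglyMeasurable (hψ : AdmissibleFun Ω ψ) (hν : UniformlySpread Ω ν) :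
    AEStronglyMeasurable (fun p => ψ p.1 p.2) ν := by
  obtain ⟨S, hS, hae⟩ := hψ.exists_exhaustion
  rw [← Measure.restrict_eq_self_of_ae_mem (hae ν hν), aestronglyMeasurable_iUnion_iff]
  exact fun j => (hS j).2.2.aestronglyMeasurable_of_isCompact (hS j).1 (hS j).1.measurableSet

theorem AdmissibleFun.integrable (hψ : AdmissibleFun Ω ψ) {α : (Fin d → ℝ) → ℝ}
    (hα : IntegrableOn α Ω) (hdom : ∀ x ∈ Ω, ∀ y ∈ unitCellPow d n, |ψ x y| ≤ α x)
    (hν : UniformlySpread Ω ν) : Integrable (fun p => ψ p.1 p.2) ν :=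
  (hν.measurePreserving_fst.integrable_comp_of_integrable hα).mono' (hψ.aestronglyMeasurable hν) <|
    (hψ.ae_mem hν).mono fun p hp => hdom p.1 hp.1 p.2 hp.2

end Admissible

section Approximation

variable {d n : ℕ} {Ω : Set (Fin d → ℝ)} {ψ : (Fin d → ℝ) → (Fin n → Fin d → ℝ) → ℝ}

theorem abs_clamp_le {M : ℝ} (hM : 0 ≤ M) (t : ℝ) : |max (-M) (min M t)| ≤ M :=
  abs_le.2 ⟨le_max_left _ _, max_le (by linarith) (min_le_left _ _)⟩

theorem abs_sub_clamp_le {M t a : ℝ} (ht : |t| ≤ a) :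
    |t - max (-M) (min M t)| ≤ max (a - M) 0 := by
  grind

theorem exists_continuousMap_comp_toTorus_eq {E : Type*} [TopologicalSpace E]
    [TopologicalSpace.MetrizableSpace E] {K : Set (E × (Fin n → Fin d → ℝ))} (hK : IsCompact K)
    (hKu : ∀ p ∈ K, p.2 ∈ unitCellPow d n) {f : E × (Fin n → Fin d → ℝ) → ℝ}
    (hf : ContinuousOn f K) {M : ℝ} (hM : 0 ≤ M) (hfM : ∀ p ∈ K, |f p| ≤ M) :
    ∃ g : C(E × UnitAddTorus (Fin n × Fin d), ℝ),
      (∀ z, |g z| ≤ M) ∧ ∀ p ∈ K, g (p.1, toTorus p.2) = f p := by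
  have := isCompact_iff_compactSpace.1 hK
  have hcont : Continuous fun p : K => (p.1.1, toTorus p.1.2) :=
    (continuous_fst.comp continuous_subtype_val).prodMk
      (continuous_toTorus.comp (continuous_snd.comp continuous_subtype_val))
  have hinj : Function.Injective fun p : K => (p.1.1, toTorus p.1.2) := fun p p' h =>
    Subtype.ext <| Prod.ext (Prod.ext_iff.1 h).1 <|
      injOn_toTorus_unitCellPow (hKu p p.2) (hKu p' p'.2) (Prod.ext_iff.1 h).2
  obtain ⟨g, hgM, hg⟩ := ContinuousMap.exists_extension_forall_mem_of_isClosedEmbedding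
    ⟨K.domRestrict f, hf.domRestrict⟩ (t := Set.Icc (-M) M) (fun p => abs_le.1 (hfM p p.2))
    ⟨0, by simpa using hM⟩ (hcont.isClosedEmbedding hinj)
  exact ⟨g, fun z => abs_le.2 (hgM z), fun p hp => congrFun hg ⟨p, hp⟩⟩

theorem tendsto_integral_max_sub_indicator_closedBall {E : Type*} [SeminormedAddCommGroup E]
    [MeasurableSpace E] [OpensMeasurableSpace E] {μ : Measure E} {α : E → ℝ} (hα : Integrable α μ) :
    Tendsto (fun j : ℕ => ∫ x, max (α x - (Metric.closedBall 0 j).indicator (fun _ => (j : ℝ)) x) 0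
      ∂μ) atTop (𝓝 0) := by
  suffices h : Tendsto (fun j : ℕ => ∫ x, max (α x -
      (Metric.closedBall 0 j).indicator (fun _ => (j : ℝ)) x) 0 ∂μ) atTop (𝓝 (∫ _, 0 ∂μ)) by
    simpa using h
  refine tendsto_integral_of_dominated_convergence (fun x => |α x|) (fun j => ?_) hα.abs
    (fun j => .of_forall fun x => ?_) (.of_forall fun x => ?_)
  · exact (hα.1.sub (aestronglyMeasurable_const.indicator measurableSet_closedBall)).sup
      aestronglyMeasurable_const
  · have := (Metric.closedBall (0 : E) j).indicator_nonneg (f := fun _ => (j : ℝ)) (by simp) x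
    rw [Real.norm_of_nonneg (le_max_right _ _)]
    exact max_le (by linarith [le_abs_self (α x)]) (abs_nonneg _)
  · refine tendsto_const_nhds.congr' ?_
    filter_upwards [eventually_ge_atTop ⌈max ‖x‖ (α x)⌉₊] with j hj
    have hj' := max_le_iff.1 (Nat.ceil_le.1 hj)
    rw [Set.indicator_of_mem (mem_closedBall_zero_iff.2 hj'.1), max_eq_right (by linarith)]

theorem UniformlySpread.exists_forall_measure_notMem_prod_le (n : ℕ) {B : Set (Fin d → ℝ)}
    (hB : Bornology.IsBounded B) (hBm : MeasurableSet B) {τ : ℝ} (hτ : 0 < τ) :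
    ∃ δ > 0, ∀ X Y : Set (Fin d → ℝ), MeasurableSet X → MeasurableSet Y →
      volume (Ω \ X) ≤ ENNReal.ofReal δ → volume (unitCell d \ Y) ≤ ENNReal.ofReal δ →
      ∀ ν : Measure ((Fin d → ℝ) × (Fin n → Fin d → ℝ)), UniformlySpread Ω ν →
        ν {p | p.1 ∈ B ∧ p ∉ X ×ˢ Set.univ.pi fun _ => Y} ≤ ENNReal.ofReal τ := by
  set C := volume.real (Metric.cthickening 1 B)
  have hC : volume (Metric.cthickening 1 B) = ENNReal.ofReal C :=
    (ENNReal.ofReal_toReal hB.cthickening.measure_lt_top.ne).symm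
  have hpos : 0 < 1 + n * C := by positivity
  refine ⟨τ / (1 + n * C), by positivity, fun X Y hX hY hΩX hY' ν hν => ?_⟩
  calc ν {p | p.1 ∈ B ∧ p ∉ X ×ˢ Set.univ.pi fun _ => Y}
      ≤ volume (Ω \ X) + n * (volume (Metric.cthickening 1 B) * volume (unitCell d \ Y)) :=
        hν.measure_notMem_prod_le hBm hX hY
    _ ≤ ENNReal.ofReal (τ / (1 + n * C)) +
          n * (ENNReal.ofReal C * ENNReal.ofReal (τ / (1 + n * C))) := by
        rw [hC]
        gcongr
    _ = ENNReal.ofReal τ := by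
        rw [← ENNReal.ofReal_natCast, ← ENNReal.ofReal_mul (by positivity),
          ← ENNReal.ofReal_mul (by positivity), ← ENNReal.ofReal_add (by positivity)
          (by positivity)]
        congr 1
        field_simp

theorem AdmissibleFun.exists_approx_clamp (hψ : AdmissibleFun Ω ψ) {M : ℝ} (hM : 0 ≤ M)
    {B : Set (Fin d → ℝ)} (hB : IsCompact B) {τ : ℝ} (hτ : 0 < τ) :
    ∃ F : (Fin d → ℝ) → C(UnitAddTorus (Fin n × Fin d), ℝ),
      Integrable F ∧ (∀ x ∉ Ω, F x = 0) ∧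
      ∃ D : Set ((Fin d → ℝ) × (Fin n → Fin d → ℝ)), MeasurableSet D ∧
        (∀ ν, UniformlySpread Ω ν → ν D ≤ ENNReal.ofReal τ) ∧
        ∀ p, |B.indicator (fun x => max (-M) (min M (ψ x p.2))) p.1 - F p.1 (toTorus p.2)| ≤
          D.indicator (fun _ => 2 * M) p := by
  obtain ⟨δ, hδ, hδτ⟩ := UniformlySpread.exists_forall_measure_notMem_prod_le (Ω := Ω) n
    hB.isBounded hB.measurableSet hτ
  obtain ⟨X, hX, hXΩ, hΩX, Y, hY, hYu, hY', hcont⟩ := hψ δ hδ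
  obtain ⟨g, hgM, hg⟩ := exists_continuousMap_comp_toTorus_eq
    (hX.prod (isCompact_univ_pi fun _ => hY)) (fun p hp => Set.pi_mono (fun _ _ => hYu) hp.2)
    (continuousOn_const.sup (continuousOn_const.inf hcont)) hM fun p _ => abs_clamp_le hM _
  let D : Set ((Fin d → ℝ) × (Fin n → Fin d → ℝ)) :=
    {p | p.1 ∈ B ∧ p ∉ X ×ˢ Set.univ.pi fun _ => Y}
  refine ⟨(X ∩ B).indicator g.curry, ?_, fun x hx => Set.indicator_of_notMem
    (fun hxX => hx (hXΩ hxX.1)) _, D, ?_, hδτ X Y hX.measurableSet hY.measurableSet hΩX hY',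
    fun p => ?_⟩
  · have hXB := hX.inter hB
    exact (g.curry.continuous.continuousOn.integrableOn_compact hXB).integrable_indicator
      hXB.measurableSet
  · exact (measurable_fst hB.measurableSet).inter
      (hX.measurableSet.prod (.univ_pi fun _ => hY.measurableSet)).compl
  · by_cases hpB : p.1 ∈ B
    · by_cases hpK : p ∈ X ×ˢ Set.univ.pi fun _ => Y
      · rw [Set.indicator_of_notMem (show p ∉ D from fun hpD => hpD.2 hpK)]
        simp [hpK.1, hpB, hg p hpK]
      · rw [Set.indicator_of_mem hpB, Set.indicator_of_mem (show p ∈ D from ⟨hpB, hpK⟩), two_mul]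
        refine (abs_sub _ _).trans (add_le_add (abs_clamp_le hM _) ?_)
        by_cases hpX : p.1 ∈ X <;> simp [hpX, hpB, hgM, hM]
    · simp [hpB, D]

theorem UniformlySpread.integrable_apply_toTorus
    {ν : Measure ((Fin d → ℝ) × (Fin n → Fin d → ℝ))} (hν : UniformlySpread Ω ν)
    {F : (Fin d → ℝ) → C(UnitAddTorus (Fin n × Fin d), ℝ)} (hF : Integrable F) :
    Integrable (fun p => F p.1 (toTorus p.2)) ν :=
  integrable_apply_comp (F := fun p => F p.1)
    (continuous_toTorus.comp continuous_snd).aestronglyMeasurable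
    (hν.measurePreserving_fst.integrable_comp_of_integrable hF.restrict)

theorem UniformlySpread.abs_integral_le
    {ν : Measure ((Fin d → ℝ) × (Fin n → Fin d → ℝ))} (hν : UniformlySpread Ω ν)
    {f : (Fin d → ℝ) × (Fin n → Fin d → ℝ) → ℝ} {β : (Fin d → ℝ) → ℝ} (hβ : IntegrableOn β Ω)
    {D : Set ((Fin d → ℝ) × (Fin n → Fin d → ℝ))} (hD : MeasurableSet D) {τ : ℝ} (hτ : 0 ≤ τ)
    (hDτ : ν D ≤ ENNReal.ofReal τ) {c : ℝ} (hc : 0 ≤ c)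
    (hf : ∀ᵐ p ∂ν, |f p| ≤ β p.1 + D.indicator (fun _ => c) p) :
    |∫ p, f p ∂ν| ≤ (∫ x in Ω, β x) + c * τ := by
  have hβν : Integrable (fun p => β p.1) ν :=
    hν.measurePreserving_fst.integrable_comp_of_integrable hβ
  have hDν : Integrable (D.indicator fun _ => c) ν :=
    (integrable_indicator_iff hD).2 (integrableOn_const (hDτ.trans_lt ENNReal.ofReal_lt_top).ne)
  have hβ_fst : ∫ p, β p.1 ∂ν = ∫ x in Ω, β x := by
    rw [IntegrableOn, ← hν.measurePreserving_fst.map_eq] at hβ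
    rw [← hν.measurePreserving_fst.map_eq, integral_map measurable_fst.aemeasurable hβ.1]
  calc |∫ p, f p ∂ν|
      ≤ ∫ p, β p.1 + D.indicator (fun _ => c) p ∂ν :=
        norm_integral_le_of_norm_le (f := f) (hβν.fun_add hDν) hf
    _ = (∫ x in Ω, β x) + c * ν.real D := by
        rw [integral_add hβν hDν, hβ_fst, integral_indicator_const _ hD, smul_eq_mul, mul_comm]
    _ ≤ (∫ x in Ω, β x) + c * τ := by
        gcongr
        exact ENNReal.toReal_le_of_le_ofReal hτ hDτ

theorem AdmissibleFun.exists_integrable_approx (hψ : AdmissibleFun Ω ψ) {α : (Fin d → ℝ) → ℝ}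
    (hα : IntegrableOn α Ω) (hdom : ∀ x ∈ Ω, ∀ y ∈ unitCellPow d n, |ψ x y| ≤ α x)
    {η : ℝ} (hη : 0 < η) :
    ∃ F : (Fin d → ℝ) → C(UnitAddTorus (Fin n × Fin d), ℝ),
      Integrable F ∧ (∀ x ∉ Ω, F x = 0) ∧
      ∀ ν, UniformlySpread Ω ν →
        |(∫ p, ψ p.1 p.2 ∂ν) - ∫ p, F p.1 (toTorus p.2) ∂ν| ≤ η := by
  obtain ⟨j, hj⟩ := ((tendsto_integral_max_sub_indicator_closedBall hα).eventually_le_const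
    (half_pos hη)).exists
  let B : Set (Fin d → ℝ) := Metric.closedBall 0 j
  let β (x : Fin d → ℝ) : ℝ := max (α x - B.indicator (fun _ => (j : ℝ)) x) 0
  have hB : IsCompact B := isCompact_closedBall 0 (j : ℝ)
  have hβ : IntegrableOn β Ω := by
    have hBj : IntegrableOn (fun _ => (j : ℝ)) B := integrableOn_const hB.measure_lt_top.ne
    exact (hα.sub (hBj.integrable_indicator hB.measurableSet).integrableOn).pos_part
  obtain ⟨F, hF, hFΩ, D, hDm, hD, hFψ⟩ :=
    hψ.exists_approx_clamp j.cast_nonneg hB (τ := η / (2 * (2 * j + 1))) (by positivity)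
  refine ⟨F, hF, hFΩ, fun ν hν => ?_⟩
  have hpt : ∀ᵐ p ∂ν, |ψ p.1 p.2 - F p.1 (toTorus p.2)| ≤
      β p.1 + D.indicator (fun _ => 2 * (j : ℝ)) p := by
    filter_upwards [hψ.ae_mem hν] with p hp
    refine (abs_sub_le _ (B.indicator (fun x => max (-j : ℝ) (min j (ψ x p.2))) p.1) _).trans
      (add_le_add ?_ (hFψ p))
    have hle := hdom p.1 hp.1 p.2 hp.2
    by_cases hpB : p.1 ∈ B
    · simpa [β, hpB] using abs_sub_clamp_le hle
    · simpa [β, hpB] using .inl hle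
  calc |(∫ p, ψ p.1 p.2 ∂ν) - ∫ p, F p.1 (toTorus p.2) ∂ν|
      = |∫ p, ψ p.1 p.2 - F p.1 (toTorus p.2) ∂ν| := by
        rw [integral_sub (hψ.integrable hα hdom hν) (hν.integrable_apply_toTorus hF)]
    _ ≤ (∫ x in Ω, β x) + 2 * j * (η / (2 * (2 * j + 1))) :=
        hν.abs_integral_le hβ hDm (by positivity) (hD ν hν) (by positivity) hpt
    _ ≤ η / 2 + η / 2 := by
        refine add_le_add hj ?_
        rw [mul_div_assoc', div_le_div_iff₀ (by positivity) two_pos]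
        linarith
    _ = η := add_halves η

end Approximation

section Main

variable {d n : ℕ}

theorem tendsto_integral_apply_toTorus_vFn {ρ : Fin n → ℝ → ℝ} {ε : ℕ → ℝ}
    (hr : SeparatedScales atTop fun k h => ρ k (ε h)) {Ω : Set (Fin d → ℝ)}
    {F : (Fin d → ℝ) → C(UnitAddTorus (Fin n × Fin d), ℝ)} (hF : Integrable F)
    (hFΩ : ∀ x ∉ Ω, F x = 0) :
    Tendsto (fun h => ∫ x in Ω, F x (toTorus (vFn ρ ε h x))) atTop
      (𝓝 (∫ p, F p.1 (toTorus p.2)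
        ∂((volume.restrict Ω).prod (volume.restrict (unitCellPow d n))))) := by
  have hlim : ∫ p, F p.1 (toTorus p.2)
      ∂((volume.restrict Ω).prod (volume.restrict (unitCellPow d n))) = ∫ x, ∫ t, F x t := by
    rw [integral_prod _ ((uniformlySpread_prod Ω).integrable_apply_toTorus hF),
      setIntegral_eq_integral_of_forall_compl_eq_zero fun x hx => by simp [hFΩ x hx]]
    refine integral_congr_ae (.of_forall fun x => ?_)
    simp only [← (measurePreserving_toTorus (d := d) (n := n)).map_eq]
    rw [integral_map measurePreserving_toTorus.aemeasurable
      (F x).continuous.aestronglyMeasurable]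
  rw [hlim]
  refine (tendsto_integral_apply_toTorus hr hF).congr fun h => ?_
  rw [setIntegral_eq_integral_of_forall_compl_eq_zero fun x hx => by simp [hFΩ x hx]]
  exact integral_congr_ae (.of_forall fun x => congrArg (F x) (toTorus_fract _).symm)

theorem tendsto_of_forall_exists_eventually_dist_le {ι Y : Type*} [PseudoMetricSpace Y]
    {l : Filter ι} {u : ι → Y} {a : Y}
    (H : ∀ η > 0, ∃ (v : ι → Y) (b : Y), Tendsto v l (𝓝 b) ∧ (∀ᶠ i in l, dist (u i) (v i) ≤ η) ∧
      dist b a ≤ η) : Tendsto u l (𝓝 a) := by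
  refine Metric.tendsto_nhds.2 fun η hη => ?_
  obtain ⟨v, b, hv, huv, hba⟩ := H (η / 3) (by positivity)
  filter_upwards [huv, Metric.tendsto_nhds.1 hv (η / 3) (by positivity)] with i hi hi'
  linarith [dist_triangle4 (u i) (v i) b a]

theorem statement4_general
    (Ω : Set (Fin d → ℝ))
    (ρ : Fin n → ℝ → ℝ) (hρpos : ∀ k e, 0 < e → 0 < ρ k e)
    (hρ0 : ∀ k, Tendsto (ρ k) (𝓝[>] 0) (𝓝 0))
    (hsep : ∀ (k : ℕ) (hk : k + 1 < n),
      Tendsto (fun e => ρ ⟨k + 1, hk⟩ e / ρ ⟨k, Nat.lt_of_succ_lt hk⟩ e) (𝓝[>] 0) (𝓝 0))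
    (ε : ℕ → ℝ) (hεpos : ∀ h, 0 < ε h) (hε0 : Tendsto ε atTop (𝓝 0))
    (ψ : (Fin d → ℝ) → (Fin n → Fin d → ℝ) → ℝ) (hψ : AdmissibleFun Ω ψ)
    (α : (Fin d → ℝ) → ℝ) (hα : IntegrableOn α Ω)
    (hdom : ∀ x ∈ Ω, ∀ y ∈ unitCellPow d n, |ψ x y| ≤ α x) :
    Tendsto (fun h => ∫ x in Ω, ψ x (vFn ρ ε h x)) atTop
      (𝓝 (∫ x in Ω, ∫ y in unitCellPow d n, ψ x y)) := by
  have hε : Tendsto ε atTop (𝓝[>] 0) := tendsto_nhdsWithin_iff.2 ⟨hε0, .of_forall hεpos⟩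
  have hr : SeparatedScales atTop fun k h => ρ k (ε h) := .of_tendsto_div_succ
    (fun k h => hρpos k _ (hεpos h)) (fun k => (hρ0 k).comp hε) fun k hk => (hsep k hk).comp hε
  have hspread : ∀ᶠ h in atTop,
      UniformlySpread Ω ((volume.restrict Ω).map fun x => (x, vFn ρ ε h x)) :=
    (eventually_all.2 fun k => (hr.tendsto_zero k).eventually_le_const one_pos).mono fun h hh =>
      uniformlySpread_map_vFn Ω fun k => ⟨hρpos k _ (hεpos h), hh k⟩
  have hprod := uniformlySpread_prod (n := n) Ω
  refine tendsto_of_forall_exists_eventually_dist_le fun η hη => ?_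
  obtain ⟨F, hF, hFΩ, happrox⟩ := hψ.exists_integrable_approx hα hdom hη
  refine ⟨_, _, tendsto_integral_apply_toTorus_vFn hr hF hFΩ, hspread.mono fun h hν => ?_, ?_⟩
  · have hmeas := (measurable_prodMk_vFn ρ ε h).aemeasurable (μ := volume.restrict Ω)
    have := happrox _ hν
    rwa [integral_map hmeas (hψ.aestronglyMeasurable hν),
      integral_map hmeas (hν.integrable_apply_toTorus hF).1] at this
  · rw [← integral_prod _ (hψ.integrable hα hdom hprod), dist_comm]
    exact happrox _ hprod

end Main

/-- For an admissible function `ψ` dominated by a positive `α ∈ L¹(Ω)`,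
`∫_Ω ψ(x, v_h(x)) dx → ∫_{Ω×□^n} ψ(x,y) dx dy`. -/
theorem statement4
    (d n : ℕ) (hd : 0 < d) (hn : 0 < n)
    (Ω : Set (Fin d → ℝ)) (hΩo : IsOpen Ω) (hΩb : Bornology.IsBounded Ω)
    (ρ : Fin n → ℝ → ℝ) (hρpos : ∀ k e, 0 < e → 0 < ρ k e)
    (hρ0 : ∀ k, Tendsto (ρ k) (𝓝[>] 0) (𝓝 0))
    (hsep : ∀ (k : ℕ) (hk : k + 1 < n),
      Tendsto (fun e => ρ ⟨k + 1, hk⟩ e / ρ ⟨k, Nat.lt_of_succ_lt hk⟩ e) (𝓝[>] 0) (𝓝 0))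
    (ε : ℕ → ℝ) (hεpos : ∀ h, 0 < ε h) (hε0 : Tendsto ε atTop (𝓝 0))
    (ψ : (Fin d → ℝ) → (Fin n → Fin d → ℝ) → ℝ) (hψ : AdmissibleFun Ω ψ)
    (α : (Fin d → ℝ) → ℝ) (hαint : IntegrableOn α Ω) (hαpos : ∀ x ∈ Ω, 0 < α x)
    (hdom : ∀ x ∈ Ω, ∀ y ∈ unitCellPow d n, |ψ x y| ≤ α x) :
    Tendsto (fun h => ∫ x in Ω, ψ x (vFn ρ ε h x)) atTop
      (𝓝 (∫ x in Ω, ∫ y in unitCellPow d n, ψ x y)) := by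
  exact statement4_general Ω ρ hρpos hρ0 hsep ε hεpos hε0 ψ hψ α hαint hdom
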